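/- arXiv:1207.5222 — 2 statements merged into one kernel-verified Lean document; each statement's English description precedes it below -/
import Mathlib

section
/- Let α > 0 be real, β ∈ ℂ, n ∈ ℕ, f₁,…,f_n ∈ ℂ and b₀,…,b_n ∈ ℂ, and assume n + β + αj ≠ 0 for all 0 ≤ j ≤ n. Then Σ_{k=0}^n b_{n−k} A_{−(n+β)/α, k}(f₁,…,f_k) = Σ_{k=0}^n C(−(n+β)/α, k) b_{n−k} Σ_{j=0}^k (−1)^{k+j} ((n+β+αk)/(n+β+αj)) C(k,j) A_{j,k}(f₁,…,f_k). (Equivalently: the coefficients c_n of Laplace's method given by Wojdylo's potential-polynomial formula coincide with the formula of Corollary 2 of the paper.) -/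
open Finset

/-- Partial ordinary Bell polynomials: `obell f n k` is the coefficient of `x^n` in
`(∑_{m ≥ 1} f m * x^m)^k`, i.e. `B_{n,k}(f₁, …, f_{n-k+1})`. -/
noncomputable def obell (f : ℕ → ℂ) (n k : ℕ) : ℂ :=
  PowerSeries.coeff (R := ℂ) n ((PowerSeries.mk fun m => if m = 0 then 0 else f m) ^ k)

/-- Generalized binomial coefficient `C(ρ, k) = ρ(ρ-1)⋯(ρ-k+1)/k!`. -/
noncomputable def gbinom (ρ : ℂ) (k : ℕ) : ℂ :=
  (∏ i ∈ Finset.range k, (ρ - i)) / (Nat.factorial k : ℂ)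

/-- Ordinary potential polynomials `A_{ρ,n}(f₁,…,f_n) = ∑_{k=0}^n C(ρ,k) B_{n,k}`. -/
noncomputable def opot (ρ : ℂ) (f : ℕ → ℂ) (n : ℕ) : ℂ :=
  ∑ k ∈ Finset.range (n + 1), gbinom ρ k * obell f n k

lemma gbinom_succ' (ρ : ℂ) (m : ℕ) : gbinom ρ (m+1) = gbinom ρ m * (ρ - m) / (m+1) := by
  have h1 : ((m:ℂ)+1) ≠ 0 := by exact_mod_cast Nat.succ_ne_zero m
  have h2 : (Nat.factorial m : ℂ) ≠ 0 := by exact_mod_cast Nat.factorial_ne_zero m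
  unfold gbinom
  rw [Finset.prod_range_succ, Nat.factorial_succ]
  push_cast
  field_simp

lemma choose_succ_C (j m : ℕ) : (Nat.choose j (m+1) : ℂ) = Nat.choose j m * ((j:ℂ) - m) / (m+1) := by
  have h1 : ((m:ℂ)+1) ≠ 0 := by exact_mod_cast Nat.succ_ne_zero m
  rw [eq_div_iff h1]
  rcases le_or_gt m j with h | h
  · have := Nat.choose_succ_right_eq j m
    rw [← Nat.cast_sub h]
    exact_mod_cast this
  · rw [Nat.choose_eq_zero_of_lt h, Nat.choose_eq_zero_of_lt (by omega)]; simp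

lemma gbinom_nat (j m : ℕ) : gbinom (j:ℂ) m = Nat.choose j m := by
  induction m with
  | zero => simp [gbinom]
  | succ m ih => rw [gbinom_succ', ih, choose_succ_C]

lemma alt_zero (k m : ℕ) (h : m < k) :
    ∑ j ∈ Finset.range (k+1), (-1:ℂ)^(k+j) * Nat.choose k j * Nat.choose j m = 0 := by
  have h1 := fwdDiff_iter_choose_zero m k
  rw [if_neg (by omega), fwdDiff_iter_eq_sum_shift] at h1
  have h2 := congrArg (Int.cast : ℤ → ℂ) h1
  push_cast at h2
  rw [← h2]
  apply Finset.sum_congr rfl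
  intro j hj
  have : j ≤ k := by simp at hj; omega
  obtain ⟨d, rfl⟩ := Nat.exists_eq_add_of_le this
  have e : j + d + j = d + 2 * j := by ring
  simp [e, pow_add, pow_mul]

lemma fwd_inv (ρ : ℂ) (k : ℕ) : ∀ y : ℕ, (∀ i ≤ k, ((y + i : ℕ):ℂ) - ρ ≠ 0) →
    (fwdDiff 1)^[k] (fun x : ℕ => ((x:ℂ) - ρ)⁻¹) y * ∏ i ∈ Finset.range (k+1), (((y+i : ℕ):ℂ) - ρ)
      = (-1)^k * Nat.factorial k := by
  induction k with
  | zero => intro y h; have := h 0 le_rfl; simp at this ⊢; exact inv_mul_cancel₀ this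
  | succ k ih =>
    intro y h
    have a := ih y (fun i hi => h i (by omega))
    have b := ih (y+1) (fun i hi => by have := h (i+1) (by omega); rwa [show y + 1 + i = y + (i+1) by ring])
    rw [Function.iterate_succ_apply', fwdDiff, sub_mul]
    nth_rewrite 1 [Finset.prod_range_succ']
    rw [Finset.prod_range_succ _ (k+1), ← mul_assoc, ← mul_assoc, a]
    simp only [show ∀ i, y + 1 + i = y + (i+1) by intro i; ring] at b
    rw [b, Nat.factorial_succ]
    push_cast
    ring

lemma base_id (ρ : ℂ) (k : ℕ) (h : ∀ j ≤ k, (j:ℂ) - ρ ≠ 0) :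
    gbinom ρ k * (k - ρ) * ∑ j ∈ Finset.range (k+1), (-1:ℂ)^(k+j) * Nat.choose k j * ((j:ℂ) - ρ)⁻¹ = 1 := by
  have h1 := fwd_inv ρ k 0 (by simpa using h)
  rw [fwdDiff_iter_eq_sum_shift] at h1
  have h2 : ∑ j ∈ Finset.range (k+1), (-1:ℂ)^(k+j) * Nat.choose k j * ((j:ℂ) - ρ)⁻¹ =
     ∑ j ∈ Finset.range (k + 1), ((-1:ℤ) ^ (k - j) * (k.choose j : ℤ)) • (((0 + j • 1 : ℕ):ℂ) - ρ)⁻¹ := by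
    apply Finset.sum_congr rfl
    intro j hj
    have : j ≤ k := by simp at hj; omega
    obtain ⟨d, rfl⟩ := Nat.exists_eq_add_of_le this
    have e : j + d + j = d + 2 * j := by ring
    simp [e, pow_add, pow_mul]
  rw [← h2] at h1
  have h3 : gbinom ρ k * (k - ρ) = (-1)^k * (∏ i ∈ Finset.range (k+1), (((0+i : ℕ):ℂ) - ρ)) / Nat.factorial k := by
    unfold gbinom
    rw [Finset.prod_range_succ]
    have : ∏ i ∈ Finset.range k, (ρ - i) = (-1)^k * ∏ i ∈ Finset.range k, (((0+i : ℕ):ℂ) - ρ) := by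
      rw [← Finset.card_range k, ← Finset.prod_const, Finset.card_range, ← Finset.prod_mul_distrib]
      apply Finset.prod_congr rfl
      intros; push_cast; ring
    rw [this]
    push_cast
    ring
  have hf : (Nat.factorial k : ℂ) ≠ 0 := by exact_mod_cast Nat.factorial_ne_zero k
  rw [h3, div_mul_eq_mul_div, div_eq_iff hf, mul_assoc, mul_comm (∏ i ∈ _, _), h1, ← mul_assoc, ← mul_pow]
  simp

lemma full_id (ρ : ℂ) (k : ℕ) (h : ∀ j ≤ k, (j:ℂ) - ρ ≠ 0) (m : ℕ) (hm : m ≤ k) :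
    gbinom ρ k * (k - ρ) * ∑ j ∈ Finset.range (k+1),
      (-1:ℂ)^(k+j) * Nat.choose k j * ((j:ℂ) - ρ)⁻¹ * Nat.choose j m = gbinom ρ m := by
  induction m with
  | zero => simpa [gbinom] using base_id ρ k h
  | succ m ih =>
    have ih := ih (by omega)
    have z := alt_zero k m (by omega)
    have : ∑ j ∈ Finset.range (k+1),
      (-1:ℂ)^(k+j) * Nat.choose k j * ((j:ℂ) - ρ)⁻¹ * Nat.choose j (m+1) =
      (∑ j ∈ Finset.range (k+1), (-1:ℂ)^(k+j) * Nat.choose k j * Nat.choose j m) / (m+1) +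
      (∑ j ∈ Finset.range (k+1),
      (-1:ℂ)^(k+j) * Nat.choose k j * ((j:ℂ) - ρ)⁻¹ * Nat.choose j m) * ((ρ - m) / (m+1)) := by
      rw [Finset.sum_div, Finset.sum_mul, ← Finset.sum_add_distrib]
      apply Finset.sum_congr rfl
      intro j hj
      have hj := h j (by simp at hj; omega)
      have h1 : ((m:ℂ)+1) ≠ 0 := by exact_mod_cast Nat.succ_ne_zero m
      rw [choose_succ_C]
      field_simp
      ring
    rw [this, z, gbinom_succ', ← ih]
    ring

lemma opot_id (ρ : ℂ) (f : ℕ → ℂ) (k : ℕ) (h : ∀ j ≤ k, (j:ℂ) - ρ ≠ 0) :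
    opot ρ f k = gbinom ρ k * (k - ρ) * ∑ j ∈ Finset.range (k+1),
      (-1:ℂ)^(k+j) * Nat.choose k j * ((j:ℂ) - ρ)⁻¹ * opot (j:ℂ) f k := by
  unfold opot
  simp only [gbinom_nat, Finset.mul_sum]
  rw [Finset.sum_comm]
  apply Finset.sum_congr rfl
  intro m hm
  rw [← full_id ρ k h m (by simp at hm; omega), Finset.mul_sum, Finset.sum_mul]
  apply Finset.sum_congr rfl
  intros; ring

/-- Wojdylo's potential-polynomial form of the coefficients of Laplace's method coincides
with the formula of Corollary 2:
`∑_{k=0}^n b_{n-k} A_{-(n+β)/α, k} = ∑_{k=0}^n C(-(n+β)/α, k) b_{n-k}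
  ∑_{j=0}^k (-1)^{k+j} ((n+β+αk)/(n+β+αj)) C(k,j) A_{j,k}`. -/
theorem wojdylo_eq_corollary (α : ℝ) (hα : 0 < α) (β : ℂ) (n : ℕ) (f : ℕ → ℂ) (b : ℕ → ℂ)
    (hne : ∀ j : ℕ, j ≤ n → (n : ℂ) + β + (α : ℂ) * (j : ℂ) ≠ 0) :
    ∑ k ∈ Finset.range (n + 1), b (n - k) * opot (-(((n : ℂ) + β) / (α : ℂ))) f k =
      ∑ k ∈ Finset.range (n + 1), gbinom (-(((n : ℂ) + β) / (α : ℂ))) k * b (n - k) *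
        ∑ j ∈ Finset.range (k + 1), (-1 : ℂ) ^ (k + j) *
          (((n : ℂ) + β + (α : ℂ) * (k : ℂ)) / ((n : ℂ) + β + (α : ℂ) * (j : ℂ))) *
          (Nat.choose k j : ℂ) * opot (j : ℂ) f k := by
  have hα' : (α:ℂ) ≠ 0 := by exact_mod_cast hα.ne'
  have key : ∀ j : ℕ, (n : ℂ) + β + (α : ℂ) * (j : ℂ) = α * ((j:ℂ) - (-(((n : ℂ) + β) / (α : ℂ)))) := by
    intro j; field_simp; ring
  simp only [key] at hne ⊢
  generalize (-(((n : ℂ) + β) / (α : ℂ))) = ρ at *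
  apply Finset.sum_congr rfl
  intro k hk
  have hk : k ≤ n := by simp at hk; omega
  rw [opot_id ρ f k (fun j hj => right_ne_zero_of_mul (hne j (hj.trans hk)))]
  simp only [Finset.mul_sum]
  apply Finset.sum_congr rfl
  intro j hj
  rw [mul_div_mul_left _ _ hα']
  ring
end

section
/- For all integers n ≥ 0 and 0 ≤ k ≤ 2n, the coefficient q_k^{(n)} := ((2n)!/(2^n n!)) · [x^k] F^{−(n+1/2)} (so that the polynomial Q_n(μ) = Σ_{k=0}^{2n} q_k^{(n)} μ^k arising in the uniform asymptotic expansion of the incomplete gamma function has these coefficients) satisfies q_k^{(n)} = Σ_{j=0}^k ((−1)^k 2^{n+j+1} Γ(n+k+3/2) / (√π (2n+2j+1)(k−j)!)) Σ_{i=0}^j ((−1)^i s(k+j+i, i)/((j−i)! (k+j+i)!)). -/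
open Finset

/-- The unsigned Stirling numbers of the first kind. -/
def stirling1 : ℕ → ℕ → ℕ
  | 0, 0 => 1
  | 0, _ + 1 => 0
  | _ + 1, 0 => 0
  | n + 1, j + 1 => stirling1 n j + n * stirling1 n (j + 1)

/-- Generalized binomial coefficient `C(ρ, k) = ρ(ρ-1)⋯(ρ-k+1)/k!` for real `ρ`. -/
noncomputable def gbinomR (ρ : ℝ) (k : ℕ) : ℝ :=
  (∏ i ∈ Finset.range k, (ρ - i)) / (Nat.factorial k : ℝ)

/-- The formal power series `F(x) = 2(x - log(1+x))/x² = ∑_{m≥0} 2(-1)^m x^m/(m+2)`. -/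
noncomputable def F : PowerSeries ℝ :=
  PowerSeries.mk fun m => 2 * (-1 : ℝ) ^ m / ((m : ℝ) + 2)

/-- For real `ρ`, the formal power series `F^ρ := ∑_{k≥0} C(ρ,k) (F-1)^k`; since `F - 1`
has zero constant term, the coefficient of `x^n` only involves `k ≤ n`. -/
noncomputable def Fpow (ρ : ℝ) : PowerSeries ℝ :=
  PowerSeries.mk fun n =>
    ∑ k ∈ Finset.range (n + 1), gbinomR ρ k * PowerSeries.coeff n ((F - 1) ^ k)

/-- The `n`-th Stirling coefficient:
`γ_n = ((-1)^n (2n)!/(2^n n!)) · [x^{2n}] F^{-(n+1/2)}`. -/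
noncomputable def stirlingCoeff (n : ℕ) : ℝ :=
  ((-1 : ℝ) ^ n * (Nat.factorial (2 * n) : ℝ) / (2 ^ n * (Nat.factorial n : ℝ))) *
    PowerSeries.coeff (2 * n) (Fpow (-((n : ℝ) + 1 / 2)))

/-- The coefficients `q_k^{(n)} = ((2n)!/(2^n n!)) [x^k] F^{-(n+1/2)}` of the polynomials
`Q_n(μ)` arising in the uniform asymptotic expansion of the incomplete gamma function. -/
noncomputable def q (n k : ℕ) : ℝ :=
  ((Nat.factorial (2 * n) : ℝ) / (2 ^ n * (Nat.factorial n : ℝ))) *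
    PowerSeries.coeff k (Fpow (-((n : ℝ) + 1 / 2)))

open PowerSeries in
/-- The formal series `log(1+x)`. -/
noncomputable def Lser : PowerSeries ℝ :=
  PowerSeries.mk fun m => (-1 : ℝ) ^ (m + 1) / (m : ℝ)

lemma X_sq_mul_F :
    (PowerSeries.X : PowerSeries ℝ) ^ 2 * F = (2 : ℝ) • (PowerSeries.X + -Lser) := by
  ext m
  rw [PowerSeries.coeff_X_pow_mul']
  rcases m with _ | _ | m
  · simp [Lser]
  · simp [Lser]
  · have h : ((m : ℝ) + 2) ≠ 0 := by positivity
    have h' : ((m : ℝ) + 1 + 1) ≠ 0 := by positivity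
    simp [Lser, F, PowerSeries.coeff_X]
    field_simp
    ring

lemma deriv_Lser :
    (1 + PowerSeries.X) * PowerSeries.derivative ℝ Lser = 1 := by
  ext m
  rw [add_mul, one_mul, map_add]
  rcases m with _ | m
  · simp [Lser, PowerSeries.coeff_derivative]
  · rw [PowerSeries.coeff_succ_X_mul, PowerSeries.coeff_derivative, PowerSeries.coeff_derivative]
    have h : ((m : ℝ) + 1) ≠ 0 := by positivity
    have h' : ((m : ℝ) + 1 + 1) ≠ 0 := by positivity
    simp [Lser, PowerSeries.coeff_one]
    field_simp
    ring

lemma Lser_rec (m i : ℕ) :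
    ((m : ℝ) + 1) * PowerSeries.coeff (m + 1) (Lser ^ (i + 1))
      + m * PowerSeries.coeff m (Lser ^ (i + 1))
      = (i + 1) * PowerSeries.coeff m (Lser ^ i) := by
  have h : (1 + PowerSeries.X) * PowerSeries.derivative ℝ (Lser ^ (i + 1))
      = ((i + 1 : ℕ) : ℝ) • Lser ^ i := by
    rw [Derivation.leibniz_pow]
    have := deriv_Lser
    simp only [Nat.add_sub_cancel, smul_eq_mul, nsmul_eq_mul]
    rw [PowerSeries.smul_eq_C_mul, map_natCast]
    linear_combination (((i + 1 : ℕ) : PowerSeries ℝ) * Lser ^ i) * this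
  have h2 := congrArg (PowerSeries.coeff m) h
  rw [add_mul, one_mul, map_add, PowerSeries.coeff_derivative] at h2
  rcases m with _ | m
  · simp at h2 ⊢
    linarith
  · rw [PowerSeries.coeff_succ_X_mul, PowerSeries.coeff_derivative] at h2
    simp at h2 ⊢
    linarith

lemma coeff_Lser_pow (m : ℕ) : ∀ i : ℕ,
    PowerSeries.coeff m (Lser ^ i) * (m.factorial : ℝ)
      = (i.factorial : ℝ) * (-1) ^ (m + i) * (stirling1 m i : ℝ) := by
  induction m with
  | zero =>
    intro i
    rcases i with _ | i
    · simp [stirling1]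
    · simp [stirling1, Lser]
  | succ m ih =>
    intro i
    rcases i with _ | i
    · simp [stirling1, PowerSeries.coeff_one]
    · have h := Lser_rec m i
      have h1 := ih i
      have h2 := ih (i + 1)
      simp only [stirling1, Nat.factorial_succ] at *
      push_cast at *
      linear_combination (m.factorial : ℝ) * h + (i + 1 : ℝ) * h1 - (m : ℝ) * h2

lemma coeff_F_pow (k j : ℕ) :
    PowerSeries.coeff k (F ^ j) = 2 ^ j * (-1) ^ (k + j) * (j.factorial : ℝ) *
      ∑ i ∈ Finset.range (j + 1),
            (-1 : ℝ) ^ i * (stirling1 (k + j + i) i : ℝ) /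
              ((Nat.factorial (j - i) : ℝ) * (Nat.factorial (k + j + i) : ℝ)) := by
  have h : PowerSeries.coeff k (F ^ j)
      = PowerSeries.coeff (k + 2 * j) ((PowerSeries.X ^ 2 * F) ^ j) := by
    rw [mul_pow, ← pow_mul, PowerSeries.coeff_X_pow_mul]
  rw [h, X_sq_mul_F, smul_pow, add_comm PowerSeries.X (-Lser), add_pow, PowerSeries.coeff_smul, map_sum, smul_eq_mul]
  push_cast
  rw [Finset.mul_sum, Finset.mul_sum]
  refine Finset.sum_congr rfl fun i hi => ?_
  have hij : i ≤ j := by simpa [Nat.lt_succ_iff] using hi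
  have e : (-Lser) ^ i * PowerSeries.X ^ (j - i) * ((j.choose i : ℕ) : PowerSeries ℝ)
      = PowerSeries.X ^ (j - i) * (((-1) ^ i * (j.choose i : ℝ)) • Lser ^ i) := by
    rw [PowerSeries.smul_eq_C_mul, neg_pow]
    simp
    ring
  have e2 : k + 2 * j = (k + j + i) + (j - i) := by omega
  rw [e, e2, PowerSeries.coeff_X_pow_mul, PowerSeries.coeff_smul, Nat.cast_choose ℝ hij]
  have h3 := coeff_Lser_pow (k + j + i) i
  have hm : ((k + j + i).factorial : ℝ) ≠ 0 := by positivity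
  have hi0 : (i.factorial : ℝ) ≠ 0 := by positivity
  have hji : ((j - i).factorial : ℝ) ≠ 0 := by positivity
  rw [eq_div_of_mul_eq hm h3]
  have hs : (-1 : ℝ) ^ (k + j + i + i) = (-1) ^ (k + j) := by
    rw [add_assoc (k + j), pow_add _ (k + j), ← two_mul, pow_mul]; simp
  rw [hs, smul_eq_mul]
  field_simp

lemma gbinomR_eq (a : ℝ) (ha : 0 < a) (l : ℕ) :
    gbinomR (-a) l = (-1) ^ l * Real.Gamma (a + l) / (Real.Gamma a * (l.factorial : ℝ)) := by
  have hG := (Real.Gamma_pos_of_pos ha).ne'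
  have h : ∏ i ∈ Finset.range l, (-a - (i : ℝ)) = (-1) ^ l * Real.Gamma (a + l) / Real.Gamma a := by
    induction l with
    | zero => simp [hG]
    | succ l ih =>
      rw [Finset.prod_range_succ, ih]
      push_cast
      rw [← add_assoc, Real.Gamma_add_one (by positivity)]
      ring
  rw [gbinomR, h, div_div]

lemma sum_Gamma (a : ℝ) (ha : 0 < a) (j m : ℕ) :
    ∑ t ∈ Finset.range (m + 1), Real.Gamma (a + (j + t : ℕ)) / (t.factorial : ℝ)
      = Real.Gamma (a + (j + m : ℕ) + 1) / ((a + j) * (m.factorial : ℝ)) := by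
  have h0 : a + (j : ℝ) ≠ 0 := by positivity
  induction m with
  | zero =>
    simp
    rw [Real.Gamma_add_one h0]
    field_simp
  | succ m ih =>
    rw [Finset.sum_range_succ, ih]
    have h1 : a + ((j + (m + 1) : ℕ) : ℝ) ≠ 0 := by positivity
    have h2 : a + ((j + m : ℕ) : ℝ) + 1 = a + ((j + (m + 1) : ℕ) : ℝ) := by push_cast; ring
    rw [h2, Real.Gamma_add_one h1, Nat.factorial_succ]
    have h3 : (m.factorial : ℝ) ≠ 0 := by positivity
    push_cast
    field_simp
    ring

lemma sum_gbinomR (a : ℝ) (ha : 0 < a) (k j : ℕ) (hj : j ≤ k) :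
    ∑ l ∈ Finset.range (k + 1), gbinomR (-a) l * ((-1) ^ (l + j) * (l.choose j : ℝ))
      = (-1) ^ j * Real.Gamma (a + k + 1) /
        (Real.Gamma a * (a + j) * (j.factorial : ℝ) * ((k - j).factorial : ℝ)) := by
  have hG := (Real.Gamma_pos_of_pos ha).ne'
  obtain ⟨m, rfl⟩ := Nat.exists_eq_add_of_le hj
  have hS := sum_Gamma a ha j m
  rw [add_assoc j m 1, Finset.sum_range_add, Finset.sum_eq_zero, zero_add]
  · have : ∀ t ∈ Finset.range (m + 1),
        gbinomR (-a) (j + t) * ((-1) ^ (j + t + j) * ((j + t).choose j : ℝ))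
        = ((-1) ^ j / (Real.Gamma a * (j.factorial : ℝ))) *
          (Real.Gamma (a + (j + t : ℕ)) / (t.factorial : ℝ)) := by
      intro t _
      rw [gbinomR_eq a ha, Nat.cast_add_choose]
      have h1 : ((j + t).factorial : ℝ) ≠ 0 := by positivity
      have h2 : (j.factorial : ℝ) ≠ 0 := by positivity
      have h3 : (t.factorial : ℝ) ≠ 0 := by positivity
      have hs : (-1 : ℝ) ^ (j + t) * (-1) ^ (j + t + j) = (-1) ^ j := by
        rw [pow_add _ (j + t) j, ← mul_assoc, ← mul_pow]; simp
      field_simp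
      linear_combination hs
    rw [Finset.sum_congr rfl this, ← Finset.mul_sum, hS]
    rw [Nat.add_sub_cancel_left, div_mul_div_comm]
    congr 1
    ring
  · intro l hl
    rw [Nat.choose_eq_zero_of_lt (by simpa using hl)]
    simp

lemma coeff_Fpow (a : ℝ) (ha : 0 < a) (k : ℕ) :
    PowerSeries.coeff k (Fpow (-a)) = ∑ j ∈ Finset.range (k + 1),
      ((-1) ^ j * Real.Gamma (a + k + 1) /
        (Real.Gamma a * (a + j) * (j.factorial : ℝ) * ((k - j).factorial : ℝ))) *
      PowerSeries.coeff k (F ^ j) := by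
  have h : ∀ l ∈ Finset.range (k + 1), PowerSeries.coeff k ((F - 1) ^ l)
      = ∑ j ∈ Finset.range (k + 1),
        ((-1) ^ (l + j) * (l.choose j : ℝ)) * PowerSeries.coeff k (F ^ j) := by
    intro l hl
    have hl' : l + 1 ≤ k + 1 := by simpa using hl
    rw [sub_pow, map_sum]
    rw [← Finset.sum_subset (Finset.range_subset_range.2 hl')]
    · refine Finset.sum_congr rfl fun j hj => ?_
      have e : (-1) ^ (j + l) * F ^ j * 1 ^ (l - j) * ((l.choose j : ℕ) : PowerSeries ℝ)
          = (((-1) ^ (l + j) * (l.choose j : ℝ))) • F ^ j := by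
        rw [PowerSeries.smul_eq_C_mul, add_comm l j]
        simp
        ring
      rw [e, PowerSeries.coeff_smul, smul_eq_mul]
    · intro j _ hj
      rw [Nat.choose_eq_zero_of_lt (by simpa using hj)]
      simp
  rw [Fpow, PowerSeries.coeff_mk]
  rw [Finset.sum_congr rfl fun l hl => by rw [h l hl, Finset.mul_sum], Finset.sum_comm]
  refine Finset.sum_congr rfl fun j hj => ?_
  rw [← sum_gbinomR a ha k j (by simpa [Nat.lt_succ_iff] using hj), Finset.sum_mul]
  exact Finset.sum_congr rfl fun l _ => by ring

lemma Gamma_half (n : ℕ) :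
    Real.Gamma ((n : ℝ) + 1 / 2) * (4 ^ n * (n.factorial : ℝ))
      = ((2 * n).factorial : ℝ) * Real.sqrt Real.pi := by
  induction n with
  | zero => simpa using Real.Gamma_one_half_eq
  | succ n ih =>
    have e : ((n + 1 : ℕ) : ℝ) + 1 / 2 = ((n : ℝ) + 1 / 2) + 1 := by push_cast; ring
    rw [e, Real.Gamma_add_one (by positivity), show 2 * (n + 1) = 2 * n + 1 + 1 by ring,
      Nat.factorial_succ, Nat.factorial_succ, Nat.factorial_succ]
    push_cast
    linear_combination (((2 * n + 1) * (2 * n + 2) : ℝ)) * ih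

/-- Explicit formula (31) for the coefficients of the polynomials `Q_n` in terms of the
unsigned Stirling numbers of the first kind. -/
theorem q_eq_sum_stirling1 (n k : ℕ) (hk : k ≤ 2 * n) :
    q n k =
      ∑ j ∈ Finset.range (k + 1),
        ((-1 : ℝ) ^ k * 2 ^ (n + j + 1) * Real.Gamma ((n : ℝ) + k + 3 / 2) /
            (Real.sqrt Real.pi * (2 * (n : ℝ) + 2 * j + 1) * (Nat.factorial (k - j) : ℝ))) *
          ∑ i ∈ Finset.range (j + 1),
            (-1 : ℝ) ^ i * (stirling1 (k + j + i) i : ℝ) /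
              ((Nat.factorial (j - i) : ℝ) * (Nat.factorial (k + j + i) : ℝ)) := by
  have ha : (0 : ℝ) < (n : ℝ) + 1 / 2 := by positivity
  have hG := (Real.Gamma_pos_of_pos ha).ne'
  have hpi : Real.sqrt Real.pi ≠ 0 := (Real.sqrt_pos.2 Real.pi_pos).ne'
  rw [q, coeff_Fpow _ ha, Finset.mul_sum]
  refine Finset.sum_congr rfl fun j hj => ?_
  rw [coeff_F_pow]
  generalize (∑ i ∈ Finset.range (j + 1), _ : ℝ) = S
  have hg := Gamma_half n
  have e : (n : ℝ) + 1 / 2 + k + 1 = (n : ℝ) + k + 3 / 2 := by ring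
  rw [e]
  have hf : (((2 * n).factorial : ℕ) : ℝ)
      = Real.Gamma ((n : ℝ) + 1 / 2) * (4 ^ n * (n.factorial : ℝ)) / Real.sqrt Real.pi := by
    rw [hg]; field_simp
  have h4 : (4 : ℝ) ^ n = 2 ^ n * 2 ^ n := by rw [← mul_pow]; norm_num
  have hs : (-1 : ℝ) ^ j * (-1) ^ (k + j) = (-1) ^ k := by
    rw [pow_add, mul_left_comm, ← mul_pow]; simp
  have h1 : (n.factorial : ℝ) ≠ 0 := by positivity
  have h2 : (j.factorial : ℝ) ≠ 0 := by positivity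
  have h3 : ((k - j).factorial : ℝ) ≠ 0 := by positivity
  have h5 : (n : ℝ) + 1 / 2 + j ≠ 0 := by positivity
  have h6 : 2 * (n : ℝ) + 2 * j + 1 = 2 * ((n : ℝ) + 1 / 2 + j) := by ring
  rw [hf, h4, h6, ← hs]
  generalize Real.Gamma ((n : ℝ) + 1 / 2) = G at *
  generalize (n : ℝ) + 1 / 2 + j = b at *
  field_simp
  ring
end
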